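/- For every δ > 0 there exists c_δ > 0 such that the following holds: for every triangle T = conv{p,q,r} ⊂ ℝ² with diameter D > 0 and Lebesgue area A > 0, there exists a finite collection of balls D_1,…,D_k covering T, each of diameter at most D, such that Σ_{i=1}^{k} (diam D_i)^{1+δ} ≤ c_δ · D^{1−δ} · A^{δ}. -/

import Mathlib

/-!
A triangle of diameter `D` and area `A` contains a ball of radius `ρ` comparable to `A / D` about
its centroid: by Cramer's rule and Hadamard's inequality, a displacement of length at most `ρ`
changes the barycentric coordinates of the centroid by too little to make one of them negative.
A maximal `ρ`-separated subset of the triangle gives a cover by balls of radius `ρ`. The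
concentric balls of radius `ρ / 2` are disjoint and, by convexity, lie in the homothetic copy of
the triangle with ratio `3 / 2` about the centroid, so there are `O(A / ρ ^ 2)` of them. Hence
`∑ (2ρ) ^ (1 + δ) = O(A ρ ^ (δ - 1)) = O(D ^ (1 - δ) A ^ δ)`. The same argument works for a
simplex in any dimension.
-/

open Matrix MeasureTheory

noncomputable section

abbrev M3 := Matrix (Fin 3) (Fin 3) ℝ
abbrev E3 := EuclideanSpace ℝ (Fin 3)

/-- The Rauzy generators. -/
def A : Fin 3 → M3
  | 0 => !![1,1,1; 0,1,0; 0,0,1]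
  | 1 => !![1,0,0; 1,1,1; 0,0,1]
  | 2 => !![1,0,0; 0,1,0; 1,1,1]

/-- Product of the matrices along a word. -/
def Aw (w : List (Fin 3)) : M3 := (w.map A).prod

/-- Euclidean norm of a vector in `ℝ³`. -/
def enorm3 (v : Fin 3 → ℝ) : ℝ := Real.sqrt (v 0 ^ 2 + v 1 ^ 2 + v 2 ^ 2)

/-- Largest singular value = `ℓ²` operator norm. -/
def sval1 (g : M3) : ℝ := ‖(Matrix.toEuclideanLin g).toContinuousLinearMap‖

/-- Smallest singular value (for invertible `g`): `σ₃(g) = σ₁(g⁻¹)⁻¹`. -/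
def sval3 (g : M3) : ℝ := (sval1 g⁻¹)⁻¹

/-- Middle singular value (for invertible `g`): `σ₂ = |det g|·σ₁(g⁻¹)/σ₁(g)`. -/
def sval2 (g : M3) : ℝ := |g.det| * sval1 g⁻¹ / sval1 g

def basis3 (i : Fin 3) : Fin 3 → ℝ := Pi.single i 1

def omega3 (v : Fin 3 → ℝ) : ℝ := v 0 + v 1 + v 2

def ofE : E3 → (Fin 3 → ℝ) := WithLp.equiv 2 (Fin 3 → ℝ)
def toE : (Fin 3 → ℝ) → E3 := (WithLp.equiv 2 (Fin 3 → ℝ)).symm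

/-- The standard 2-simplex in `ℝ³` (with the Euclidean metric). -/
def simplex : Set E3 := {x | (∀ i, 0 ≤ ofE x i) ∧ omega3 (ofE x) = 1}

/-- The projective action of the word `w` on the simplex. -/
def fmap (w : List (Fin 3)) (x : E3) : E3 :=
  toE ((omega3 ((Aw w) *ᵥ ofE x))⁻¹ • ((Aw w) *ᵥ ofE x))

/-- The Rauzy gasket. -/
def gasket : Set E3 :=
  ⋂ n : ℕ, ⋃ w ∈ {w : List (Fin 3) | w.length = n + 1}, fmap w '' simplex

/-- Falconer's singular value function. -/
def phi (s : ℝ) (g : M3) : ℝ :=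
  if s ≤ 1 then (sval2 g / sval1 g) ^ s
  else (sval2 g / sval1 g) * (sval3 g / sval1 g) ^ (s - 1)

/-- The affinity exponent of the Rauzy semigroup. -/
def sA : ℝ :=
  sSup {s : ℝ | s ∈ Set.Ioc (0:ℝ) 2 ∧
    ¬ Summable fun w : {w : List (Fin 3) // w ≠ []} => phi s (Aw w.1)}

/-- A word has its last `k` letters not all the same. -/
def LastNotAllSame (w : List (Fin 3)) (k : ℕ) : Prop :=
  k ≤ w.length ∧ ¬ ∃ c, ∀ x ∈ w.drop (w.length - k), x = c

/-- A word's last two letters are different. -/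
def LastTwoDiff (w : List (Fin 3)) : Prop :=
  ∃ u a b, w = u ++ [a, b] ∧ a ≠ b

/-- The Cartan projection `κ(g) = (log σ₁, log σ₂, log σ₃)`. -/
def kappa (g : M3) : Fin 3 → ℝ :=
  ![Real.log (sval1 g), Real.log (sval2 g), Real.log (sval3 g)]

/-- The linear functional `ψ_s` on the Cartan algebra. -/
def psi (s : ℝ) (lam : Fin 3 → ℝ) : ℝ := (lam 0 - lam 1) + (s - 1) * (lam 0 - lam 2)

end

section Packing

open Metric Module
open scoped NNReal ENNReal

lemma encard_mul_measure_ball_le_of_isSeparated {G : Type*} [SeminormedAddCommGroup G]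
    [MeasurableSpace G] [BorelSpace G] (μ : Measure G) [μ.IsAddLeftInvariant] {ε : ℝ≥0}
    {s t : Set G} (hts : t ⊆ s) (ht : IsSeparated ε t) :
    t.encard * μ (ball 0 (ε / 2)) ≤ μ (thickening (ε / 2) s) := by
  have hdisj : Pairwise (Function.onFun Disjoint fun x : t => ball (x : G) (ε / 2)) := by
    intro x y hxy
    have hsep : (ε : ℝ≥0∞) < edist (x : G) y := ht x.2 y.2 (Subtype.coe_ne_coe.2 hxy)
    have hdist : (ε : ℝ) < dist (x : G) y := by
      rwa [edist_nndist, ENNReal.coe_lt_coe, ← NNReal.coe_lt_coe, coe_nndist] at hsep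
    exact ball_disjoint_ball (by linarith)
  have hvol (x : t) : μ (ball (x : G) (ε / 2)) = μ (ball 0 (ε / 2)) := by
    simpa using (measure_preimage_add μ (x : G) (ball (x : G) (ε / 2))).symm
  calc t.encard * μ (ball 0 (ε / 2)) = ∑' x : t, μ (ball (x : G) (ε / 2)) := by
        simp only [hvol, ENNReal.tsum_const, Set.encard]
    _ ≤ μ (⋃ x : t, ball (x : G) (ε / 2)) :=
        tsum_meas_le_meas_iUnion_of_disjoint μ (fun _ => measurableSet_ball) hdisj
    _ ≤ μ (thickening (ε / 2) s) :=
        measure_mono (Set.iUnion_subset fun x => ball_subset_thickening (hts x.2) _)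

lemma packingNumber_mul_measure_ball_le {G : Type*} [SeminormedAddCommGroup G]
    [MeasurableSpace G] [BorelSpace G] (μ : Measure G) [μ.IsAddLeftInvariant] (ε : ℝ≥0)
    (s : Set G) :
    packingNumber ε s * μ (ball 0 (ε / 2)) ≤ μ (thickening (ε / 2) s) := by
  simp only [packingNumber, ENat.toENNReal_iSup, ENNReal.iSup_mul, iSup_le_iff]
  exact fun t hts ht => encard_mul_measure_ball_le_of_isSeparated μ hts ht

lemma exists_fin_cover_of_packingNumber_ne_top {X : Type*} [PseudoMetricSpace X] {ε : ℝ≥0}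
    {s : Set X} (h : packingNumber ε s ≠ ⊤) :
    ∃ (k : ℕ) (center : Fin k → X),
      s ⊆ ⋃ i, closedBall (center i) ε ∧ k = packingNumber ε s := by
  have hcard := encard_maximalSeparatedSet h
  obtain ⟨k, center, hinj, hrange⟩ := (Set.encard_ne_top_iff.1 (hcard ▸ h)).fin_param
  refine ⟨k, center, ?_, ?_⟩
  · have hcover := isCover_iff_subset_iUnion_closedBall.1 (isCover_maximalSeparatedSet h)
    rwa [← hrange, Set.biUnion_range] at hcover
  · rw [← hcard, ← hrange, ← Set.image_univ, hinj.encard_image, Set.encard_univ,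
      ENat.card_eq_coe_fintype_card, Fintype.card_fin]

lemma thickening_subset_image_homothety {E : Type*} [SeminormedAddCommGroup E]
    [NormedSpace ℝ E] {K : Set E} (hK : Convex ℝ K) {x : E} {ρ : ℝ} (hρ : 0 < ρ)
    (hx : closedBall x ρ ⊆ K) (r : ℝ) :
    thickening r K ⊆ AffineMap.homothety x (1 + r / ρ) '' K := by
  intro z hz
  obtain ⟨y, hy, hzy⟩ := mem_thickening_iff.1 hz
  have hr : 0 < r := dist_nonneg.trans_lt hzy
  have hball : x + (ρ / r) • (z - y) ∈ K := hx <| by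
    rw [mem_closedBall, dist_self_add_left, norm_smul, Real.norm_of_nonneg (by positivity),
      ← dist_eq_norm, div_mul_eq_mul_div, div_le_iff₀ hr]
    gcongr
  refine ⟨(ρ / (ρ + r)) • y + (r / (ρ + r)) • (x + (ρ / r) • (z - y)),
    hK hy hball (by positivity) (by positivity) (by field_simp), ?_⟩
  rw [AffineMap.homothety_apply, vsub_eq_sub, vadd_eq_add]
  match_scalars <;> field_simp <;> ring

variable {E : Type*} [NormedAddCommGroup E] [NormedSpace ℝ E] [FiniteDimensional ℝ E]
  [MeasurableSpace E] [BorelSpace E] (μ : Measure E) [μ.IsAddHaarMeasure]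
  {K : Set E} {x : E} {ρ : ℝ}

lemma packingNumber_mul_measure_ball_le_of_convex (hK : Convex ℝ K) (hρ : 0 < ρ)
    (hx : closedBall x ρ ⊆ K) (ε : ℝ≥0) :
    packingNumber ε K * μ (ball 0 (ε / 2)) ≤
      ENNReal.ofReal ((1 + ε / 2 / ρ) ^ finrank ℝ E) * μ K :=
  calc packingNumber ε K * μ (ball 0 (ε / 2))
    _ ≤ μ (thickening (ε / 2) K) := packingNumber_mul_measure_ball_le μ ε K
    _ ≤ μ (AffineMap.homothety x (1 + ε / 2 / ρ : ℝ) '' K) :=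
        measure_mono (thickening_subset_image_homothety hK hρ hx _)
    _ = ENNReal.ofReal ((1 + ε / 2 / ρ) ^ finrank ℝ E) * μ K := by
        rw [Measure.addHaar_image_homothety, abs_of_nonneg (by positivity)]

lemma exists_cover_closedBall_of_convex (hK : Convex ℝ K) (hμK : μ K ≠ ∞) (hρ : 0 < ρ)
    (hx : closedBall x ρ ⊆ K) :
    ∃ (k : ℕ) (center : Fin k → E), K ⊆ ⋃ i, closedBall (center i) ρ ∧
      k * ρ ^ finrank ℝ E * μ.real (ball 0 1) ≤ 3 ^ finrank ℝ E * μ.real K := by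
  lift ρ to ℝ≥0 using hρ.le
  have hle := packingNumber_mul_measure_ball_le_of_convex μ hK hρ hx ρ
  have hρ2 : (0 : ℝ) < ρ / 2 := by positivity
  have hfin : packingNumber ρ K ≠ ⊤ := by
    intro htop
    rw [htop, ENat.toENNReal_top, ENNReal.top_mul (measure_ball_pos μ 0 hρ2).ne'] at hle
    exact ENNReal.mul_ne_top ENNReal.ofReal_ne_top hμK (top_le_iff.1 hle)
  obtain ⟨k, center, hcover, hk⟩ := exists_fin_cover_of_packingNumber_ne_top hfin
  refine ⟨k, center, hcover, ?_⟩
  have hreal := ENNReal.toReal_mono (ENNReal.mul_ne_top ENNReal.ofReal_ne_top hμK) hle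
  rw [← hk, Measure.addHaar_ball_of_pos μ _ hρ2, ENat.toENNReal_coe, ENNReal.toReal_mul,
    ENNReal.toReal_mul, ENNReal.toReal_mul, ENNReal.toReal_natCast,
    ENNReal.toReal_ofReal (by positivity), ENNReal.toReal_ofReal (by positivity)] at hreal
  have h32 : (1 + ρ / 2 / ρ : ℝ) = 3 / 2 := by field_simp; norm_num
  rw [h32, div_pow, div_pow] at hreal
  field_simp at hreal
  exact hreal

lemma exists_cover_closedBall_rpow_le_of_convex (hK : Convex ℝ K) (hμK : μ K ≠ ∞) (hρ : 0 < ρ)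
    (hx : closedBall x ρ ⊆ K) (s : ℝ) :
    ∃ (k : ℕ) (center : Fin k → E), K ⊆ ⋃ i, closedBall (center i) ρ ∧
      k * (2 * ρ) ^ s ≤ 3 ^ finrank ℝ E / μ.real (ball 0 1) * 2 ^ s *
        (μ.real K * ρ ^ (s - finrank ℝ E)) := by
  obtain ⟨k, center, hcover, hk⟩ := exists_cover_closedBall_of_convex μ hK hμK hρ hx
  refine ⟨k, center, hcover, ?_⟩
  have hball : 0 < μ.real (ball (0 : E) 1) :=
    ENNReal.toReal_pos (measure_ball_pos μ _ one_pos).ne' measure_ball_lt_top.ne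
  rw [← le_div_iff₀ hball] at hk
  have hsplit : ρ ^ s = ρ ^ finrank ℝ E * ρ ^ (s - finrank ℝ E) := by
    rw [← Real.rpow_natCast, ← Real.rpow_add hρ, add_sub_cancel]
  calc k * (2 * ρ) ^ s
    _ = k * ρ ^ finrank ℝ E * (2 ^ s * ρ ^ (s - finrank ℝ E)) := by
        rw [Real.mul_rpow two_pos.le hρ.le, hsplit]
        ring
    _ ≤ 3 ^ finrank ℝ E * μ.real K / μ.real (ball 0 1) *
          (2 ^ s * ρ ^ (s - finrank ℝ E)) := by gcongr
    _ = 3 ^ finrank ℝ E / μ.real (ball 0 1) * 2 ^ s *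
          (μ.real K * ρ ^ (s - finrank ℝ E)) := by ring

end Packing

section Simplex

open Metric Module

section Convex

variable {𝕜 V : Type*} [Field 𝕜] [LinearOrder 𝕜] [IsStrictOrderedRing 𝕜] [AddCommGroup V]
  [Module 𝕜 V]

lemma add_sum_smul_mem_of_sum_le_one {ι : Type*} [Fintype ι] {K : Set V} (hK : Convex 𝕜 K)
    {x : V} {v : ι → V} (hx : x ∈ K) (hv : ∀ i, x + v i ∈ K) {w : ι → 𝕜} (hw : ∀ i, 0 ≤ w i)
    (hw1 : ∑ i, w i ≤ 1) :
    x + ∑ i, w i • v i ∈ K := by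
  have hmem := hK.sum_mem (t := Finset.univ) (w := fun i : Option ι => i.elim (1 - ∑ i, w i) w)
    (z := fun i => i.elim x fun i => x + v i) (by simpa [Option.forall, hw])
    (by simp [Fintype.sum_option]) (by simpa [Option.forall, hx])
  have heq : x + ∑ i, w i • v i = (1 - ∑ i, w i) • x + ∑ i, w i • (x + v i) := by
    simp only [smul_add, Finset.sum_add_distrib, ← Finset.sum_smul]
    module
  simpa [heq, Fintype.sum_option] using hmem

lemma add_sum_inv_add_smul_mem {n : ℕ} {K : Set V} (hK : Convex 𝕜 K) {x : V}
    {v : Fin (n + 1) → V} (hx : x ∈ K) (hv : ∀ i, x + v i ∈ K) {t : Fin (n + 1) → 𝕜}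
    (ht : ∀ i, |t i| ≤ 1 / ((n + 1) * (n + 2))) :
    x + ∑ i, ((n + 2 : 𝕜)⁻¹ + t i) • v i ∈ K := by
  refine add_sum_smul_mem_of_sum_le_one hK hx hv (fun i => ?_) ?_
  · have hle : 1 / ((n + 1) * (n + 2)) ≤ (n + 2 : 𝕜)⁻¹ := by
      rw [one_div, mul_inv]
      exact mul_le_of_le_one_left (by positivity) (inv_le_one_of_one_le₀ (by simp))
    linarith [neg_abs_le (t i), ht i]
  · calc ∑ i, ((n + 2 : 𝕜)⁻¹ + t i)
      _ ≤ ∑ i : Fin (n + 1), ((n + 2 : 𝕜)⁻¹ + 1 / ((n + 1) * (n + 2))) := by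
          gcongr with i
          exact (le_abs_self _).trans (ht i)
      _ = 1 := by
          simp only [Finset.sum_const, Finset.card_univ, Fintype.card_fin, nsmul_eq_mul]
          push_cast
          field_simp
          ring

end Convex

lemma map_update_basis {R M N ι : Type*} [CommRing R] [AddCommGroup M] [Module R M]
    [AddCommGroup N] [Module R N] [Finite ι] [DecidableEq ι] (ω : M [⋀^ι]→ₗ[R] N)
    (b : Basis ι R M) (i : ι) (x : M) :
    ω (Function.update b i x) = b.coord i x • ω b := by
  have := Fintype.ofFinite ι
  nth_rw 1 [← b.sum_repr x, ω.map_update_sum, Finset.sum_eq_single i]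
  · simp
  · intro j _ hji
    rw [ω.map_update_smul, ω.map_update_self _ hji.symm, smul_zero]
  · simp

/-- The edges of a simplex with vertices `p` that issue from the vertex `p 0`. -/
def edge {V : Type*} [AddCommGroup V] {n : ℕ} (p : Fin (n + 1) → V) (i : Fin n) : V :=
  p i.succ - p 0

lemma norm_edge_le_diam {E : Type*} [SeminormedAddCommGroup E] [NormedSpace ℝ E] {n : ℕ}
    (p : Fin (n + 1) → E) (i : Fin n) :
    ‖edge p i‖ ≤ diam (convexHull ℝ (Set.range p)) := by
  rw [edge, ← dist_eq_norm, convexHull_diam]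
  exact dist_le_diam_of_mem (Set.finite_range p).isBounded ⟨_, rfl⟩ ⟨_, rfl⟩

variable {E : Type*} [NormedAddCommGroup E] [InnerProductSpace ℝ E] {n : ℕ}

/-- Cramer's rule combined with Hadamard's inequality. -/
lemma abs_coord_mul_abs_volumeForm_le [Fact (finrank ℝ E = n + 1)]
    (o : Orientation ℝ E (Fin (n + 1))) (b : Basis (Fin (n + 1)) ℝ E) {D : ℝ}
    (hD : ∀ i, ‖b i‖ ≤ D) (i : Fin (n + 1)) (x : E) :
    |b.coord i x| * |o.volumeForm b| ≤ D ^ n * ‖x‖ :=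
  calc |b.coord i x| * |o.volumeForm b| = |o.volumeForm (Function.update b i x)| := by
        rw [map_update_basis, smul_eq_mul, abs_mul]
    _ ≤ ∏ j, ‖Function.update b i x j‖ := o.abs_volumeForm_apply_le _
    _ = (∏ j ∈ Finset.univ.erase i, ‖b j‖) * ‖x‖ := by
        rw [← Finset.prod_erase_mul _ _ (Finset.mem_univ i), Function.update_self]
        congr 1
        refine Finset.prod_congr rfl fun j hj => ?_
        rw [Function.update_of_ne (Finset.ne_of_mem_erase hj)]
    _ ≤ (∏ _j ∈ Finset.univ.erase i, D) * ‖x‖ := by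
        gcongr with j
        exact hD j
    _ = D ^ n * ‖x‖ := by simp

lemma closedBall_subset_of_vertices_mem [Fact (finrank ℝ E = n + 1)]
    (o : Orientation ℝ E (Fin (n + 1))) (b : Basis (Fin (n + 1)) ℝ E) {K : Set E}
    (hK : Convex ℝ K) {x : E} (hx : x ∈ K) (hb : ∀ i, x + b i ∈ K) {D ρ : ℝ}
    (hD : ∀ i, ‖b i‖ ≤ D) (hρ : (n + 1) * (n + 2) * (D ^ n * ρ) ≤ |o.volumeForm b|) :
    closedBall (x + ∑ i, (n + 2 : ℝ)⁻¹ • b i) ρ ⊆ K := by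
  intro z hz
  set y := z - (x + ∑ i, (n + 2 : ℝ)⁻¹ • b i) with hy
  have hω : 0 < |o.volumeForm b| := by
    rw [abs_pos, o.volumeForm.map_basis_ne_zero_iff]
    intro h0
    have h1 := o.abs_volumeForm_apply_of_orthonormal (o.finOrthonormalBasis n.succ_pos Fact.out)
    simp [h0] at h1
  have hcoord (i : Fin (n + 1)) : |b.coord i y| ≤ 1 / ((n + 1) * (n + 2)) := by
    have hD0 : 0 ≤ D := (norm_nonneg _).trans (hD 0)
    have hcramer : |b.coord i y| * |o.volumeForm b| ≤ D ^ n * ρ :=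
      (abs_coord_mul_abs_volumeForm_le o b hD i y).trans <| by
        gcongr
        rwa [mem_closedBall, dist_eq_norm] at hz
    rw [le_div_iff₀ (by positivity)]
    refine le_of_mul_le_mul_right ?_ hω
    calc |b.coord i y| * ((n + 1) * (n + 2)) * |o.volumeForm b|
      _ = (n + 1) * (n + 2) * (|b.coord i y| * |o.volumeForm b|) := by ring
      _ ≤ (n + 1) * (n + 2) * (D ^ n * ρ) := by gcongr
      _ ≤ 1 * |o.volumeForm b| := by rwa [one_mul]
  have hz_eq : z = x + ∑ i, ((n + 2 : ℝ)⁻¹ + b.coord i y) • b i := by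
    have hsum : ∑ i, b.coord i y • b i = y := b.sum_repr y
    simp only [add_smul, Finset.sum_add_distrib, hsum]
    rw [hy]
    abel
  rw [hz_eq]
  exact add_sum_inv_add_smul_mem hK hx hb hcoord

variable [FiniteDimensional ℝ E] [MeasurableSpace E] [BorelSpace E]

lemma volume_convexHull_range_le [Fact (finrank ℝ E = n)] (o : Orientation ℝ E (Fin n))
    (p : Fin (n + 1) → E) :
    volume (convexHull ℝ (Set.range p)) ≤ ENNReal.ofReal |o.volumeForm (edge p)| := by
  have hsub : convexHull ℝ (Set.range p) ⊆ (-p 0 + ·) ⁻¹' parallelepiped (edge p) := by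
    refine convexHull_min ?_ ((convex_parallelepiped _).translate_preimage_right _)
    rintro _ ⟨i, rfl⟩
    rw [Set.mem_preimage, mem_parallelepiped_iff]
    cases i using Fin.cases with
    | zero => exact ⟨0, by simp, by simp⟩
    | succ i =>
      refine ⟨Pi.single i 1, ⟨Pi.single_nonneg.2 zero_le_one, fun j => ?_⟩, ?_⟩
      · rw [Pi.single_apply]
        split_ifs <;> simp
      · simp [edge, Pi.single_apply, neg_add_eq_sub]
  calc volume (convexHull ℝ (Set.range p))
    _ ≤ volume ((-p 0 + ·) ⁻¹' parallelepiped (edge p)) := measure_mono hsub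
    _ = ENNReal.ofReal |o.volumeForm (edge p)| := by
        rw [measure_preimage_add, ← o.measure_eq_volume, AlternatingMap.measure_parallelepiped]

lemma volume_real_convexHull_range_le_diam_pow [Fact (finrank ℝ E = n)] (p : Fin (n + 1) → E) :
    volume.real (convexHull ℝ (Set.range p)) ≤ diam (convexHull ℝ (Set.range p)) ^ n := by
  let o : Orientation ℝ E (Fin n) := (finBasisOfFinrankEq ℝ E Fact.out).orientation
  calc volume.real (convexHull ℝ (Set.range p))
    _ ≤ |o.volumeForm (edge p)| :=
        ENNReal.toReal_le_of_le_ofReal (abs_nonneg _) (volume_convexHull_range_le o p)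
    _ ≤ ∏ i, ‖edge p i‖ := o.abs_volumeForm_apply_le _
    _ ≤ ∏ _i : Fin n, diam (convexHull ℝ (Set.range p)) := by
        gcongr with i
        exact norm_edge_le_diam p i
    _ = diam (convexHull ℝ (Set.range p)) ^ n := by simp

lemma diam_convexHull_range_pos [Fact (finrank ℝ E = n + 1)] {p : Fin (n + 2) → E}
    (hp : 0 < volume.real (convexHull ℝ (Set.range p))) :
    0 < diam (convexHull ℝ (Set.range p)) := by
  refine diam_nonneg.lt_of_ne fun h0 => hp.not_ge ?_
  simpa [← h0] using volume_real_convexHull_range_le_diam_pow (n := n + 1) p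

lemma exists_closedBall_subset_convexHull_range [Fact (finrank ℝ E = n + 1)]
    {p : Fin (n + 2) → E} (hp : 0 < volume.real (convexHull ℝ (Set.range p))) :
    ∃ x, closedBall x (volume.real (convexHull ℝ (Set.range p)) /
      ((n + 1) * (n + 2) * diam (convexHull ℝ (Set.range p)) ^ n)) ⊆
        convexHull ℝ (Set.range p) := by
  let o : Orientation ℝ E (Fin (n + 1)) := (finBasisOfFinrankEq ℝ E Fact.out).orientation
  have hvol : volume.real (convexHull ℝ (Set.range p)) ≤ |o.volumeForm (edge p)| :=
    ENNReal.toReal_le_of_le_ofReal (abs_nonneg _) (volume_convexHull_range_le o p)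
  have hli : LinearIndependent ℝ (edge p) := by
    by_contra h
    rw [o.volumeForm.map_linearDependent _ h, abs_zero] at hvol
    exact hp.not_ge hvol
  let b : Basis (Fin (n + 1)) ℝ E := basisOfLinearIndependentOfCardEqFinrank hli
    (by rw [Fintype.card_fin, Fact.out (p := finrank ℝ E = n + 1)])
  have hb : ⇑b = edge p := coe_basisOfLinearIndependentOfCardEqFinrank _ _
  have hvertex (i : Fin (n + 2)) : p i ∈ convexHull ℝ (Set.range p) :=
    subset_convexHull ℝ _ ⟨i, rfl⟩
  have hD : 0 < diam (convexHull ℝ (Set.range p)) := diam_convexHull_range_pos hp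
  refine ⟨_, closedBall_subset_of_vertices_mem o b (convex_convexHull ℝ _) (hvertex 0)
    (fun i => ?_) (D := diam (convexHull ℝ (Set.range p))) (fun i => ?_) ?_⟩
  · simpa [hb, edge] using hvertex i.succ
  · rw [hb]
    exact norm_edge_le_diam p i
  · rw [hb]
    refine le_of_eq_of_le ?_ hvol
    field_simp

end Simplex

section Radius

variable {n : ℕ} {D V : ℝ}

lemma two_mul_div_mul_pow_le (hD : 0 < D) (hVD : V ≤ D ^ (n + 1)) :
    2 * (V / ((n + 1) * (n + 2) * D ^ n)) ≤ D := by
  rw [← mul_div_assoc, div_le_iff₀ (by positivity)]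
  have h2 : (2 : ℝ) ≤ (n + 1) * (n + 2) := by
    nlinarith [Nat.cast_nonneg (α := ℝ) n]
  calc 2 * V ≤ 2 * D ^ (n + 1) := by gcongr
    _ ≤ (n + 1) * (n + 2) * D ^ (n + 1) := by gcongr
    _ = D * ((n + 1) * (n + 2) * D ^ n) := by ring

lemma mul_div_mul_pow_rpow_sub_one {m : ℝ} (hm : 0 < m) (hD : 0 < D) (hV : 0 < V) (δ : ℝ) :
    V * (V / (m * D ^ n)) ^ (δ - 1) = m ^ (1 - δ) * (D ^ (n * (1 - δ)) * V ^ δ) := by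
  have hdiv : (V / (m * D ^ n)) ^ (δ - 1) = V ^ (δ - 1) * (m * D ^ n) ^ (1 - δ) := by
    rw [Real.div_rpow hV.le (by positivity), div_eq_mul_inv, ← Real.rpow_neg (by positivity),
      neg_sub]
  rw [hdiv, Real.mul_rpow hm.le (by positivity), Real.rpow_mul hD.le, Real.rpow_natCast,
    Real.rpow_sub_one hV.ne']
  field_simp

end Radius

section Cover

open Metric Module

theorem triangle_cover_bound_general {E : Type*} [NormedAddCommGroup E] [InnerProductSpace ℝ E]
    [FiniteDimensional ℝ E] [MeasurableSpace E] [BorelSpace E] {n : ℕ}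
    (hn : finrank ℝ E = n + 1) (δ : ℝ) :
    ∃ c > (0 : ℝ), ∀ p : Fin (n + 2) → E,
      0 < volume.real (convexHull ℝ (Set.range p)) →
      ∃ (k : ℕ) (center : Fin k → E) (rad : Fin k → ℝ),
        (∀ i, 0 ≤ rad i) ∧
        convexHull ℝ (Set.range p) ⊆ ⋃ i, closedBall (center i) (rad i) ∧
        (∀ i, 2 * rad i ≤ diam (convexHull ℝ (Set.range p))) ∧
        ∑ i, (2 * rad i) ^ (n + δ) ≤
          c * diam (convexHull ℝ (Set.range p)) ^ (n * (1 - δ)) *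
            volume.real (convexHull ℝ (Set.range p)) ^ δ := by
  have : Fact (finrank ℝ E = n + 1) := ⟨hn⟩
  have hball : 0 < volume.real (ball (0 : E) 1) :=
    ENNReal.toReal_pos (measure_ball_pos _ _ one_pos).ne' measure_ball_lt_top.ne
  refine ⟨3 ^ (n + 1) / volume.real (ball (0 : E) 1) * 2 ^ (n + δ) *
    ((n + 1) * (n + 2)) ^ (1 - δ), by positivity, fun p hV => ?_⟩
  obtain ⟨x, hx⟩ := exists_closedBall_subset_convexHull_range hV
  have hVD := volume_real_convexHull_range_le_diam_pow (n := n + 1) p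
  have hD := diam_convexHull_range_pos hV
  set K := convexHull ℝ (Set.range p)
  set ρ := volume.real K / ((n + 1) * (n + 2) * diam K ^ n) with hρ_def
  have hρ : 0 < ρ := by positivity
  have hfin : volume K ≠ ⊤ := fun h => by simp [measureReal_def, h] at hV
  obtain ⟨k, center, hcover, hk⟩ := exists_cover_closedBall_rpow_le_of_convex volume
    (convex_convexHull ℝ _) hfin hρ hx (n + δ)
  refine ⟨k, center, fun _ => ρ, fun _ => hρ.le, hcover,
    fun _ => two_mul_div_mul_pow_le hD hVD, ?_⟩
  have hexp : (n + δ - (n + 1 : ℕ) : ℝ) = δ - 1 := by push_cast; ring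
  rw [hn, hexp, hρ_def, mul_div_mul_pow_rpow_sub_one (by positivity) hD hV] at hk
  simpa [hρ_def, mul_assoc] using hk

end Cover

/-- Any plane triangle of diameter `D` and area `A` can be covered by balls of diameter
at most `D` with `Σ diamᵢ^(1+δ) ≤ c_δ D^(1−δ) A^δ`. -/
theorem triangle_cover_bound (δ : ℝ) (hδ : 0 < δ) :
    ∃ c > (0:ℝ), ∀ p q r : EuclideanSpace ℝ (Fin 2),
      0 < Metric.diam (convexHull ℝ {p, q, r}) →
      0 < (volume (convexHull ℝ {p, q, r})).toReal →
      ∃ (k : ℕ) (center : Fin k → EuclideanSpace ℝ (Fin 2)) (rad : Fin k → ℝ),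
        (∀ i, 0 ≤ rad i) ∧
        convexHull ℝ {p, q, r} ⊆ ⋃ i, Metric.closedBall (center i) (rad i) ∧
        (∀ i, 2 * rad i ≤ Metric.diam (convexHull ℝ {p, q, r})) ∧
        ∑ i, (2 * rad i) ^ (1 + δ) ≤
          c * Metric.diam (convexHull ℝ {p, q, r}) ^ (1 - δ) *
            (volume (convexHull ℝ {p, q, r})).toReal ^ δ := by
  obtain ⟨c, hc, h⟩ := triangle_cover_bound_general (E := EuclideanSpace ℝ (Fin 2))
    finrank_euclideanSpace_fin δ
  refine ⟨c, hc, fun p q r _ hA => ?_⟩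
  have hrange : Set.range ![p, q, r] = {p, q, r} := by
    simp only [Matrix.range_cons, Matrix.range_empty, Set.union_empty, Set.singleton_union]
  simpa [hrange, measureReal_def] using h ![p, q, r] (by rwa [hrange])
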